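/- arXiv:1001.4462 — 2 statements merged into one kernel-verified Lean document; each statement's English description precedes it below -/
import Mathlib

section
/- There exists an optimal plain decompressor D such that no optimal prefix-free decompressor has its domain contained in the domain of D; that is, for every optimal prefix-free decompressor V, the domain of V is not a subset of the domain of D. -/
open scoped Classical

/-- Complexity of `x` with respect to decompressor `D`: length of a shortest
`D`-description of `x`, or `⊤` if none exists. -/
noncomputable def Cpx (D : List Bool →. List Bool) (x : List Bool) : ℕ∞ :=
  sInf {n : ℕ∞ | ∃ y : List Bool, x ∈ D y ∧ (y.length : ℕ∞) = n}

/-- A set of strings is prefix-free: no element is a proper prefix of another. -/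
def PrefixFreeSet (S : Set (List Bool)) : Prop :=
  ∀ p ∈ S, ∀ q ∈ S, p <+: q → p = q

/-- `U` is an optimal plain decompressor. -/
def OptimalPlain (U : List Bool →. List Bool) : Prop :=
  Partrec U ∧ ∀ D : List Bool →. List Bool, Partrec D →
    ∃ c : ℕ, ∀ x : List Bool, Cpx U x ≤ Cpx D x + (c : ℕ∞)

/-- `V` is an optimal prefix-free decompressor. -/
def OptimalPrefix (V : List Bool →. List Bool) : Prop :=
  Partrec V ∧ PrefixFreeSet V.Dom ∧
    ∀ D : List Bool →. List Bool, Partrec D → PrefixFreeSet D.Dom →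
      ∃ c : ℕ, ∀ x : List Bool, Cpx V x ≤ Cpx D x + (c : ℕ∞)

/-!
The decompressor is `D = U ∘ shrink`, where `U` is universal and `shrink` removes one bit. On the
lengths of block `j`, those in `[j ^ 2, (j + 1) ^ 2)`, `shrink` is defined on the strings whose
first `k + 1` bits lie in a set `L` of `2 ^ k` strings; each choice of `k` and `L` is made in
infinitely many blocks.

Suppose that `V` is an optimal prefix-free decompressor whose domain `W` lies in the domain of
`shrink`, and call a string unextended if no element of `W` properly extends it. As `W` meets almost
every block, `L` can never consist of unextended strings, so fewer than half of the strings of each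
length are unextended, and `L` may be chosen without any. The density of unextended strings of
length `n` increases with `n`, so if `k` is large, the strings in the domain of `shrink` that become
unextended only after length `k + 1` have density at most `ε`. By prefix-freeness, elements of `W`
padded to the end of block `j` are distinct unextended strings, so infinitely many blocks contain
far fewer elements of `W` than strings of their length. Such blocks can be found effectively, and a
prefix-free machine that outputs all strings of a length adapted to the block found describes more
strings than `V` can.
-/

namespace Decompressor

open Encodable Filter Nat.Partrec

section Complexity

variable {U D : List Bool →. List Bool} {x y : List Bool}

theorem cpx_le_length (h : x ∈ D y) : Cpx D x ≤ y.length :=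
  sInf_le ⟨y, h, rfl⟩

theorem exists_mem_of_cpx_le {n : ℕ} (h : Cpx D x ≤ n) : ∃ y, x ∈ D y ∧ y.length ≤ n := by
  have hne : {n : ℕ∞ | ∃ y : List Bool, x ∈ D y ∧ (y.length : ℕ∞) = n}.Nonempty := by
    by_contra hne
    rw [Cpx, Set.not_nonempty_iff_eq_empty.1 hne, sInf_empty, top_le_iff] at h
    exact ENat.natCast_ne_top n h
  obtain ⟨y, hy, hyn⟩ := csInf_mem hne
  exact ⟨y, hy, by exact_mod_cast hyn.trans_le h⟩

theorem cpx_le_cpx_add {c : ℕ}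
    (h : ∀ y, ∀ x ∈ D y, ∃ y', x ∈ U y' ∧ y'.length ≤ y.length + c) (x : List Bool) :
    Cpx U x ≤ Cpx D x + c := by
  rcases eq_or_ne (Cpx D x) ⊤ with htop | htop
  · simp [htop]
  · obtain ⟨n, hn⟩ := ENat.ne_top_iff_exists.1 htop
    obtain ⟨y, hy, hyn⟩ := exists_mem_of_cpx_le hn.ge
    obtain ⟨y', hy', hle⟩ := h y x hy
    rw [← hn]
    exact (cpx_le_length hy').trans (by exact_mod_cast hle.trans (by omega))

theorem optimalPlain_bind_option (hU : OptimalPlain U) {g : List Bool → Option (List Bool)}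
    (hg : Computable g) {c : ℕ} (hgc : ∀ p, ∃ y, g y = some p ∧ y.length ≤ p.length + c) :
    OptimalPlain fun y => (g y : Part (List Bool)).bind U := by
  refine ⟨hg.ofOption.bind (hU.1.comp Computable.snd).to₂, fun D hD => ?_⟩
  obtain ⟨d, hd⟩ := hU.2 D hD
  refine ⟨c + d, fun x => ?_⟩
  have hle : Cpx (fun y => (g y : Part (List Bool)).bind U) x ≤ Cpx U x + c :=
    cpx_le_cpx_add (fun p x hx => by
      obtain ⟨y, hy, hlen⟩ := hgc p
      exact ⟨y, Part.mem_bind_iff.2 ⟨p, by simp [hy], hx⟩, hlen⟩) x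
  calc _ ≤ Cpx D x + d + c := hle.trans (add_le_add_left (hd x) _)
    _ = Cpx D x + (c + d : ℕ) := by rw [add_assoc, add_comm (d : ℕ∞), Nat.cast_add]

end Complexity

section Strings

/-- The list of all binary strings of length `n`, for use in primitive recursive searches. -/
def strings : ℕ → List (List Bool)
  | 0 => [[]]
  | n + 1 => (strings n).flatMap fun l => [false :: l, true :: l]

theorem mem_strings {n : ℕ} {x : List Bool} : x ∈ strings n ↔ x.length = n := by
  induction n generalizing x with
  | zero => simp [strings]
  | succ n ih =>
    rcases x with _ | ⟨b, x⟩
    · simp [strings]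
    · cases b <;> simp [strings, ih]

theorem length_strings (n : ℕ) : (strings n).length = 2 ^ n := by
  induction n with
  | zero => simp [strings]
  | succ n ih => simp [strings, List.length_flatMap, ih, pow_succ]

theorem nodup_strings (n : ℕ) : (strings n).Nodup := by
  induction n with
  | zero => simp [strings]
  | succ n ih =>
    refine List.nodup_flatMap.2 ⟨fun l _ => by simp, ih.imp fun {a b} hab => ?_⟩
    simp [Function.onFun, Ne.symm hab]

theorem primrec_strings : Primrec strings := by
  have hcons (b : Bool) : Primrec fun a : (ℕ × List (List Bool)) × List Bool => b :: a.2 :=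
    Primrec.list_cons.comp (Primrec.const b) Primrec.snd
  have hstep : Primrec₂ fun (_ : ℕ) (l : List (List Bool)) =>
      l.flatMap fun l => [false :: l, true :: l] :=
    Primrec.list_flatMap Primrec.snd (Primrec.list_cons.comp (hcons false)
      (Primrec.list_cons.comp (hcons true) (Primrec.const [])))
  refine (Primrec.nat_rec₁ [[]] hstep).of_eq fun n => ?_
  induction n with
  | zero => rfl
  | succ n ih => rw [strings, ← ih]

/-- The finite set of binary strings of length `n`, for counting. -/
def stringsFinset (n : ℕ) : Finset (List Bool) := ⟨strings n, nodup_strings n⟩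

theorem mem_stringsFinset {n : ℕ} {x : List Bool} : x ∈ stringsFinset n ↔ x.length = n :=
  mem_strings

theorem card_stringsFinset (n : ℕ) : (stringsFinset n).card = 2 ^ n :=
  length_strings n

theorem card_lt_of_length_lt {n : ℕ} {A : Finset (List Bool)} (h : ∀ x ∈ A, x.length < n) :
    A.card < 2 ^ n := by
  have hA : A ⊆ (Finset.range n).biUnion stringsFinset := fun x hx => by
    simpa [mem_stringsFinset] using h x hx
  calc A.card ≤ ∑ i ∈ Finset.range n, (stringsFinset i).card :=
        (Finset.card_le_card hA).trans Finset.card_biUnion_le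
    _ = ∑ i ∈ Finset.range n, 2 ^ i := by simp [card_stringsFinset]
    _ < 2 ^ n := Nat.geomSum_lt le_rfl fun k hk => Finset.mem_range.1 hk

theorem card_filter_take_mem {m : ℕ} {A : Finset (List Bool)} (hA : A ⊆ stringsFinset m) (d : ℕ) :
    ((stringsFinset (m + d)).filter fun y => y.take m ∈ A).card = A.card * 2 ^ d := by
  rw [← card_stringsFinset d, ← Finset.card_product]
  refine Finset.card_nbij' (fun y => (y.take m, y.drop m)) (fun p => p.1 ++ p.2) ?_ ?_
    (fun y _ => List.take_append_drop m y) ?_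
  · intro y hy
    simp only [Finset.coe_filter, Set.mem_ofPred_eq, mem_stringsFinset] at hy
    simp [mem_stringsFinset, hy.1, hy.2]
  · rintro ⟨a, b⟩ hab
    obtain ⟨ha, hb⟩ := Finset.mem_product.1 hab
    have hlen : a.length = m := mem_stringsFinset.1 (hA ha)
    simpa [mem_stringsFinset, hlen, List.take_left' hlen, ha] using mem_stringsFinset.1 hb
  · rintro ⟨a, b⟩ hab
    have hlen : a.length = m := mem_stringsFinset.1 (hA (Finset.mem_product.1 hab).1)
    exact Prod.ext (List.take_left' hlen) (List.drop_left' hlen)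

end Strings

section Computability

theorem dom_coe_option {α σ : Type*} (g : α → Option σ) :
    PFun.Dom (fun a => (g a : Part σ)) = {a | (g a).isSome} := by
  ext a
  cases h : g a <;> simp [PFun.Dom, h]

variable {α σ : Type*} [Primcodable α] [Primcodable σ]

theorem primrec_two_pow {f : α → ℕ} (hf : Primrec f) : Primrec fun a => 2 ^ f a :=
  (Primrec₂.unpaired'.1 Nat.Primrec.pow).comp (Primrec.const 2) hf

theorem exists_code_eval_encode {f : α →. σ} (hf : Partrec f) :
    ∃ c : Code, ∀ a, c.eval (encode a) = (f a).map encode := by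
  obtain ⟨c, hc⟩ := Code.exists_code.1 hf
  exact ⟨c, fun a => by simp [hc]⟩

theorem exists_primrec_dom_eq_iUnion {f : α →. σ} (hf : Partrec f) :
    ∃ stage : ℕ → List α, Primrec stage ∧ Monotone (fun s => {a | a ∈ stage s}) ∧
      f.Dom = ⋃ s, {a | a ∈ stage s} := by
  obtain ⟨c, hc⟩ := exists_code_eval_encode hf
  have hR : PrimrecRel fun (a : α) (s : ℕ) => (Code.evaln s c (encode a)).isSome :=
    Primrec.eq.comp (Primrec.option_isSome.comp (Code.primrec_evaln.comp
      ((Primrec.snd.pair (Primrec.const c)).pair (Primrec.encode.comp Primrec.fst))))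
      (Primrec.const true)
  have hmem (a : α) (s : ℕ) : a ∈ ((List.range s).filterMap (decode (α := α))).filter
      (fun a => (Code.evaln s c (encode a)).isSome) ↔ (Code.evaln s c (encode a)).isSome := by
    simp only [List.mem_filter, List.mem_filterMap, List.mem_range, and_iff_right_iff_imp]
    intro h
    obtain ⟨x, hx⟩ := Option.isSome_iff_exists.1 h
    exact ⟨encode a, Code.evaln_bound hx, encodek a⟩
  refine ⟨fun s => ((List.range s).filterMap decode).filter
    fun a => (Code.evaln s c (encode a)).isSome, ?_, ?_, ?_⟩
  · exact (hR.listFilter.comp (Primrec.listFilterMap Primrec.list_range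
      (Primrec.decode.comp Primrec.snd).to₂) Primrec.id).of_eq fun s => by simp
  · intro s t hst a ha
    obtain ⟨x, hx⟩ := Option.isSome_iff_exists.1 ((hmem a s).1 ha)
    exact (hmem a t).2 (Option.isSome_iff_exists.2 ⟨x, Code.evaln_mono hst hx⟩)
  · ext a
    have hdom : (f a).Dom ↔ (c.eval (encode a)).Dom := by rw [hc]; rfl
    rw [Set.mem_iUnion, PFun.mem_dom, ← Part.dom_iff_mem, hdom, Part.dom_iff_mem]
    simp only [Set.mem_ofPred_eq, hmem, Option.isSome_iff_exists, Code.evaln_complete]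
    exact exists_comm

end Computability

section Tag

/-- The self-delimiting prefix `1 ^ e 0` followed by `p`: it passes a numerical parameter `e` to a
machine along with its input `p`. -/
def tag (e : ℕ) (p : List Bool) : List Bool := List.replicate e true ++ false :: p

/-- The parameter `e` of a string `tag e p`. -/
def tagIndex (y : List Bool) : ℕ := y.idxOf false

/-- The input `p` of a string `tag e p`. -/
def untag (y : List Bool) : List Bool := y.drop (tagIndex y + 1)

theorem tagIndex_tag (e : ℕ) (p : List Bool) : tagIndex (tag e p) = e := by
  rw [tagIndex, tag, List.idxOf_append_of_notMem (by simp)]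
  simp

theorem untag_tag (e : ℕ) (p : List Bool) : untag (tag e p) = p := by
  rw [untag, tagIndex_tag]
  simp [tag, List.drop_append]

theorem length_tag (e : ℕ) (p : List Bool) : (tag e p).length = e + 1 + p.length := by
  simp only [tag, List.length_append, List.length_replicate, List.length_cons]
  omega

theorem primrec_tagIndex : Primrec tagIndex :=
  Primrec.list_idxOf.comp (Primrec.const false) Primrec.id

theorem primrec_untag : Primrec untag :=
  Primrec.list_drop.comp (Primrec.succ.comp primrec_tagIndex) Primrec.id

/-- A universal plain machine: on input `tag e p` it runs the program with number `e` on `p`. -/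
def universal (y : List Bool) : Part (List Bool) :=
  ((Denumerable.ofNat Code (tagIndex y)).eval (encode (untag y))).bind
    fun n => (decode n : Option (List Bool))

theorem partrec_universal : Partrec universal := by
  refine (Code.eval_part.comp ((Primrec.ofNat Code).comp primrec_tagIndex).to_comp
    (Primrec.encode.comp primrec_untag).to_comp).bind ?_
  exact (Computable.ofOption (Computable.decode.comp Computable.snd)).to₂

theorem exists_universal_tag_eq {D : List Bool →. List Bool} (hD : Partrec D) :
    ∃ e, ∀ y, universal (tag e y) = D y := by
  obtain ⟨c, hc⟩ := exists_code_eval_encode hD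
  refine ⟨encode c, fun y => ?_⟩
  rw [universal, tagIndex_tag, untag_tag, Denumerable.ofNat_encode, hc]
  ext x
  simp

theorem optimalPlain_universal : OptimalPlain universal := by
  refine ⟨partrec_universal, fun D hD => ?_⟩
  obtain ⟨e, he⟩ := exists_universal_tag_eq hD
  exact ⟨e + 1, cpx_le_cpx_add fun y x hx =>
    ⟨tag e y, by rwa [he], by rw [length_tag]; omega⟩⟩

/-- The prefix-free machine mapping `tag e p` to `p` for the strings `p` of length `h e`. -/
def selfDelimiting (h : ℕ → ℕ) (y : List Bool) : Option (List Bool) :=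
  if y.length = tagIndex y + 1 + h (tagIndex y) then some (untag y) else none

theorem selfDelimiting_tag {h : ℕ → ℕ} {e : ℕ} {p : List Bool} (hp : p.length = h e) :
    selfDelimiting h (tag e p) = some p := by
  rw [selfDelimiting, tagIndex_tag, untag_tag, length_tag, hp, if_pos rfl]

theorem computable_selfDelimiting {h : ℕ → ℕ} (hh : Computable h) :
    Computable (selfDelimiting h) := by
  have hlen : Computable fun y : List Bool => tagIndex y + 1 + h (tagIndex y) :=
    Primrec.nat_add.to_comp.comp (Primrec.succ.comp primrec_tagIndex).to_comp
      (hh.comp primrec_tagIndex.to_comp)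
  refine (Computable.cond (Primrec.beq.to_comp.comp Primrec.list_length.to_comp hlen)
    (Primrec.option_some.comp primrec_untag).to_comp (Computable.const none)).of_eq fun y => ?_
  rw [selfDelimiting, Bool.cond_eq_ite]
  simp

theorem prefixFreeSet_selfDelimiting (h : ℕ → ℕ) :
    PrefixFreeSet (PFun.Dom fun y => (selfDelimiting h y : Part (List Bool))) := by
  rw [dom_coe_option]
  rintro p hp _ hq ⟨r, rfl⟩
  have hlen {y : List Bool} (hy : (selfDelimiting h y).isSome) :
      y.length = tagIndex y + 1 + h (tagIndex y) := by
    by_contra hne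
    simp [selfDelimiting, hne] at hy
  have hidx : tagIndex (p ++ r) = tagIndex p :=
    List.idxOf_append_of_mem (List.idxOf_lt_length_iff.1 (by
      have := hlen hp
      rw [tagIndex] at this
      omega))
  refine (List.prefix_append p r).eq_of_length ?_
  rw [hlen hp, hlen hq, hidx]

end Tag

section Unextended

/-- No element of `W` properly extends `y`. -/
def Unextended (W : Set (List Bool)) (y : List Bool) : Prop := ∀ w ∈ W, y <+: w → w = y

variable {V W : Set (List Bool)} {y z : List Bool}

theorem Unextended.anti (hVW : V ⊆ W) (hy : Unextended W y) : Unextended V y :=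
  fun w hw => hy w (hVW hw)

theorem Unextended.of_prefix (hy : Unextended W y) (hyz : y <+: z) : Unextended W z := by
  intro w hw hzw
  obtain rfl := hy w hw (hyz.trans hzw)
  exact hyz.eq_of_length_le hzw.length_le

theorem unextended_of_mem (hW : PrefixFreeSet W) (hy : y ∈ W) : Unextended W y :=
  fun w hw hyw => (hW y hy w hw hyw).symm

/-- The strings of length `n` not properly extended by elements of `W`. -/
noncomputable def unextendedStrings (W : Set (List Bool)) (n : ℕ) : Finset (List Bool) :=
  (stringsFinset n).filter (Unextended W)

theorem mem_unextendedStrings {n : ℕ} :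
    y ∈ unextendedStrings W n ↔ y.length = n ∧ Unextended W y := by
  rw [unextendedStrings, Finset.mem_filter, mem_stringsFinset]

theorem unextendedStrings_subset (W : Set (List Bool)) (n : ℕ) :
    unextendedStrings W n ⊆ stringsFinset n :=
  Finset.filter_subset _ _

theorem eventually_unextendedStrings_eq {F : ℕ → Set (List Bool)} (hF : Monotone F) (n : ℕ) :
    ∀ᶠ s in atTop, unextendedStrings (F s) n = unextendedStrings (⋃ s, F s) n := by
  have hiff (y : List Bool) : ∀ᶠ s in atTop, (Unextended (F s) y ↔ Unextended (⋃ s, F s) y) := by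
    by_cases hy : Unextended (⋃ s, F s) y
    · exact Eventually.of_forall fun s => iff_of_true (hy.anti (Set.subset_iUnion F s)) hy
    · obtain ⟨w, hw, hyw, hne⟩ : ∃ w ∈ ⋃ s, F s, y <+: w ∧ w ≠ y := by
        simpa [Unextended] using hy
      obtain ⟨t, ht⟩ := Set.mem_iUnion.1 hw
      filter_upwards [eventually_ge_atTop t] with s hs
      exact iff_of_false (fun h => hne (h w (hF hs ht) hyw)) hy
  filter_upwards [(stringsFinset n).eventually_all.2 fun y _ => hiff y] with s hs
  exact Finset.filter_congr hs

theorem card_unextendedStrings_mul_add_le {m d : ℕ} {T : Finset (List Bool)}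
    (hT : T ⊆ unextendedStrings W (m + d)) (hTm : ∀ y ∈ T, y.take m ∉ unextendedStrings W m) :
    (unextendedStrings W m).card * 2 ^ d + T.card ≤ (unextendedStrings W (m + d)).card := by
  rw [← card_filter_take_mem (unextendedStrings_subset W m) d, ← Finset.card_union_of_disjoint
    (Finset.disjoint_right.2 fun y hy h => hTm y hy (Finset.mem_filter.1 h).2)]
  refine Finset.card_le_card (Finset.union_subset (fun y hy => ?_) hT)
  obtain ⟨hlen, htake⟩ := Finset.mem_filter.1 hy
  exact mem_unextendedStrings.2 ⟨mem_stringsFinset.1 hlen,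
    (mem_unextendedStrings.1 htake).2.of_prefix (List.take_prefix m y)⟩

/-- The proportion of unextended strings among the strings of length `n`. -/
noncomputable def unextendedDensity (W : Set (List Bool)) (n : ℕ) : ℝ :=
  (unextendedStrings W n).card / 2 ^ n

theorem unextendedDensity_add_le {m n : ℕ} (hmn : m ≤ n) {T : Finset (List Bool)}
    (hT : T ⊆ unextendedStrings W n) (hTm : ∀ y ∈ T, y.take m ∉ unextendedStrings W m) :
    unextendedDensity W m + T.card / 2 ^ n ≤ unextendedDensity W n := by
  obtain ⟨d, rfl⟩ := Nat.exists_eq_add_of_le hmn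
  have hcard : ((unextendedStrings W m).card * 2 ^ d + T.card : ℝ) ≤
      (unextendedStrings W (m + d)).card := by
    exact_mod_cast card_unextendedStrings_mul_add_le hT hTm
  calc unextendedDensity W m + T.card / 2 ^ (m + d)
      = ((unextendedStrings W m).card * 2 ^ d + T.card) / 2 ^ (m + d) := by
        rw [unextendedDensity, add_div, pow_add, mul_div_mul_right _ _ (by positivity)]
    _ ≤ unextendedDensity W (m + d) := by
        rw [unextendedDensity]
        gcongr

theorem monotone_unextendedDensity (W : Set (List Bool)) : Monotone (unextendedDensity W) :=
  fun m n hmn => by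
    simpa using unextendedDensity_add_le (W := W) hmn (Finset.empty_subset _) (by simp)

theorem unextendedDensity_le_one (W : Set (List Bool)) (n : ℕ) : unextendedDensity W n ≤ 1 := by
  refine (div_le_one (by positivity)).2 ?_
  exact_mod_cast (Finset.card_le_card (unextendedStrings_subset W n)).trans
    (card_stringsFinset n).le

theorem eventually_forall_unextendedDensity_le (W : Set (List Bool)) {ε : ℝ} (hε : 0 < ε) :
    ∀ᶠ m in atTop, ∀ n, unextendedDensity W n ≤ unextendedDensity W m + ε := by
  have hbdd : BddAbove (Set.range (unextendedDensity W)) :=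
    ⟨1, Set.forall_mem_range.2 (unextendedDensity_le_one W)⟩
  have hlim := tendsto_atTop_ciSup (monotone_unextendedDensity W) hbdd
  filter_upwards [hlim.eventually_const_lt (sub_lt_self _ hε)] with m hm n
  linarith [le_ciSup hbdd n]

end Unextended

section Blocks

/-- The index `j` of the block `[j ^ 2, (j + 1) ^ 2)` of lengths that contains the length of `y`. -/
def block (y : List Bool) : ℕ := Nat.sqrt y.length

/-- The last length `(j + 1) ^ 2 - 1` in block `j`. -/
def blockEnd (j : ℕ) : ℕ := j * j + 2 * j

theorem block_eq_iff {y : List Bool} {j : ℕ} :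
    block y = j ↔ j * j ≤ y.length ∧ y.length ≤ blockEnd j := by
  rw [block, eq_comm, Nat.eq_sqrt, blockEnd]
  grind

theorem primrec_block : Primrec block :=
  Primrec.nat_sqrt.comp Primrec.list_length

theorem primrec_blockEnd : Primrec blockEnd :=
  Primrec.nat_add.comp (Primrec.nat_mul.comp Primrec.id Primrec.id)
    (Primrec.nat_mul.comp (Primrec.const 2) Primrec.id)

end Blocks

section Confining

/-- In infinitely many blocks, all elements of `S` have prefixes in a prescribed set `L` that
contains at least half of the strings of its length, and elements of `S` can be extended within
their block. The domains of optimal prefix-free decompressors are not contained in such sets. -/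
structure Confining (S : Set (List Bool)) : Prop where
  mem_of_prefix : ∀ {y z : List Bool}, y ∈ S → y <+: z → block y = block z → z ∈ S
  frequently_take_mem : ∀ {k : ℕ} {L : Finset (List Bool)}, L ⊆ stringsFinset (k + 1) →
    2 ^ k ≤ L.card → ∃ᶠ j in atTop, ∀ y ∈ S, block y = j → y.take (k + 1) ∈ L

variable {S W : Set (List Bool)}

theorem Confining.card_unextendedStrings_lt (hS : Confining S) (hWS : W ⊆ S)
    (hW : ∀ᶠ j in atTop, ∃ w ∈ W, block w = j) (k : ℕ) :
    (unextendedStrings W (k + 1)).card < 2 ^ k := by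
  by_contra! hcard
  obtain ⟨j, hj, ⟨w, hw, hwj⟩, hkj⟩ :=
    ((hS.frequently_take_mem (unextendedStrings_subset W (k + 1)) hcard).and_eventually
      (hW.and (eventually_gt_atTop (k + 1)))).exists
  obtain ⟨hlen, hun⟩ := mem_unextendedStrings.1 (hj w (hWS hw) hwj)
  have hwk : w.length = k + 1 := by rw [hun w hw (List.take_prefix _ _), hlen]
  have hjw := (block_eq_iff.1 hwj).1
  nlinarith

theorem Confining.frequently_card_filter_le (hS : Confining S) (hWS : W ⊆ S)
    (hW : ∀ᶠ j in atTop, ∃ w ∈ W, block w = j) {ε : ℝ} (hε : 0 < ε) :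
    ∃ᶠ j in atTop,
      (((unextendedStrings W (blockEnd j)).filter (· ∈ S)).card : ℝ) ≤ ε * 2 ^ blockEnd j := by
  obtain ⟨k, hk⟩ :=
    ((tendsto_add_atTop_nat 1).eventually (eventually_forall_unextendedDensity_le W hε)).exists
  have hext : 2 ^ k ≤ (stringsFinset (k + 1) \ unextendedStrings W (k + 1)).card := by
    have hle := Finset.le_card_sdiff (unextendedStrings W (k + 1)) (stringsFinset (k + 1))
    have hlt := hS.card_unextendedStrings_lt hWS hW k
    rw [card_stringsFinset, pow_succ] at hle
    omega
  refine ((hS.frequently_take_mem Finset.sdiff_subset hext).and_eventually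
    (eventually_gt_atTop k)).mono fun j ⟨hj, hkj⟩ => ?_
  have hkend : k + 1 ≤ blockEnd j := Nat.le_trans hkj (by rw [blockEnd]; omega)
  have hnew : ∀ y ∈ (unextendedStrings W (blockEnd j)).filter (· ∈ S),
      y.take (k + 1) ∉ unextendedStrings W (k + 1) := fun y hy => by
    obtain ⟨hyW, hyS⟩ := Finset.mem_filter.1 hy
    have hyj : block y = j := block_eq_iff.2 (by
      rw [(mem_unextendedStrings.1 hyW).1, blockEnd]
      omega)
    exact (Finset.mem_sdiff.1 (hj y hyS hyj)).2
  have hdens := (unextendedDensity_add_le hkend (Finset.filter_subset _ _) hnew).trans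
    (hk (blockEnd j))
  exact (div_le_iff₀ (by positivity)).1 (le_of_add_le_add_left hdens)

/-- Block `j` holds too few unextended strings of `S` for a prefix-free set between `W` and `S` to
contain `2 ^ n` strings of length at most `blockEnd j = e + 1 + n + e`, as it must if it is the
domain of an optimal decompressor with constant `e`. -/
def IsSparse (S W : Set (List Bool)) (e j : ℕ) : Prop :=
  e < j ∧ 2 ^ (j * j) + ((unextendedStrings W (blockEnd j)).filter (· ∈ S)).card ≤
    2 ^ (blockEnd j - (2 * e + 1))

theorem IsSparse.anti {e j : ℕ} {F : Set (List Bool)} (h : IsSparse S F e j) (hFW : F ⊆ W) :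
    IsSparse S W e j := by
  refine ⟨h.1, le_trans ?_ h.2⟩
  gcongr
  exact Finset.monotone_filter_right _ fun y _ hy => hy.anti hFW

theorem Confining.exists_isSparse (hS : Confining S) (hWS : W ⊆ S)
    (hW : ∀ᶠ j in atTop, ∃ w ∈ W, block w = j) (e : ℕ) : ∃ j, IsSparse S W e j := by
  obtain ⟨j, hcard, hj⟩ := ((hS.frequently_card_filter_le hWS hW
    (show (0 : ℝ) < (2 ^ (2 * e + 2))⁻¹ by positivity)).and_eventually
      (eventually_gt_atTop e)).exists
  obtain ⟨n, hn⟩ := Nat.exists_eq_add_of_le (show 2 * e + 2 ≤ blockEnd j by rw [blockEnd]; omega)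
  refine ⟨j, hj, ?_⟩
  have hshort : 2 ^ (j * j) ≤ 2 ^ n := Nat.pow_le_pow_right two_pos (by rw [blockEnd] at hn; omega)
  have hlong : ((unextendedStrings W (blockEnd j)).filter (· ∈ S)).card ≤ 2 ^ n := by
    have hpow : (2 : ℝ) ^ blockEnd j = 2 ^ (2 * e + 2) * 2 ^ n := by rw [hn, pow_add]
    rw [hpow, inv_mul_cancel_left₀ (by positivity)] at hcard
    exact_mod_cast hcard
  rw [show blockEnd j - (2 * e + 1) = n + 1 by omega, pow_succ]
  omega

theorem injOn_rightpad (hW : PrefixFreeSet W) (n : ℕ) (b : Bool) :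
    Set.InjOn (List.rightpad n b) W := by
  intro v hv w hw h
  have hvw : v <+: List.rightpad n b w := h ▸ List.prefix_append _ _
  have hww : w <+: List.rightpad n b w := List.prefix_append _ _
  rcases List.prefix_or_prefix_of_prefix hvw hww with hpre | hpre
  · exact hW v hv w hw hpre
  · exact (hW w hw v hv hpre).symm

theorem Confining.card_lt_add_card_filter (hS : Confining S) (hWS : W ⊆ S)
    (hW : PrefixFreeSet W) {j : ℕ} {Z : Finset (List Bool)}
    (hZ : ∀ w ∈ Z, w ∈ W ∧ w.length ≤ blockEnd j) :
    Z.card < 2 ^ (j * j) + ((unextendedStrings W (blockEnd j)).filter (· ∈ S)).card := by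
  have hshort : (Z.filter fun w => w.length < j * j).card < 2 ^ (j * j) :=
    card_lt_of_length_lt fun w hw => (Finset.mem_filter.1 hw).2
  have hlong : (Z.filter fun w => ¬ w.length < j * j).card ≤
      ((unextendedStrings W (blockEnd j)).filter (· ∈ S)).card := by
    refine Finset.card_le_card_of_injOn (List.rightpad (blockEnd j) false) (fun w hw => ?_)
      ((injOn_rightpad hW _ _).mono fun w hw => (hZ w (Finset.mem_filter.1 hw).1).1)
    obtain ⟨hwZ, hlen⟩ := Finset.mem_filter.1 hw
    obtain ⟨hwW, hle⟩ := hZ w hwZ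
    have hpre : w <+: List.rightpad (blockEnd j) false w := List.prefix_append _ _
    have hpad : (List.rightpad (blockEnd j) false w).length = blockEnd j := by
      rw [List.length_rightpad, max_eq_left hle]
    have hun := (unextended_of_mem hW hwW).of_prefix hpre
    refine Finset.mem_filter.2 ⟨mem_unextendedStrings.2 ⟨hpad, hun⟩,
      hS.mem_of_prefix (hWS hwW) hpre ?_⟩
    rw [block_eq_iff.2 ⟨not_lt.1 hlen, hle⟩,
      block_eq_iff.2 ⟨by rw [hpad, blockEnd]; omega, hpad.le⟩]
  have hsplit := Z.card_filter_add_card_filter_not (fun w => w.length < j * j)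
  omega

theorem primrec_card_unextendedStrings_filter (hS : PrimrecPred (· ∈ S)) :
    Primrec₂ fun (F : List (List Bool)) (n : ℕ) =>
      ((unextendedStrings {w | w ∈ F} n).filter (· ∈ S)).card := by
  have hext : PrimrecRel fun (w y : List Bool) => y <+: w → w = y :=
    ((Primrec.eq.comp Primrec.snd
      (Primrec.list_take.comp (Primrec.list_length.comp Primrec.snd) Primrec.fst)).not.or
        (Primrec.eq.comp Primrec.fst Primrec.snd)).of_eq fun p => by
          simp only [List.prefix_iff_eq_take, imp_iff_not_or]
  have hrel : PrimrecRel fun (y : List Bool) (F : List (List Bool)) =>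
      y ∈ S ∧ Unextended {w | w ∈ F} y :=
    (hS.comp Primrec.fst).and (hext.forall_mem_list.comp Primrec.snd Primrec.fst)
  refine (Primrec.list_length.comp (hrel.listFilter.comp
    (primrec_strings.comp Primrec.snd) Primrec.fst)).of_eq fun p => ?_
  simp only [unextendedStrings, Finset.filter_filter, and_comm]
  rfl

theorem primrecRel_isSparse (hS : PrimrecPred (· ∈ S)) {stage : ℕ → List (List Bool)}
    (hstage : Primrec stage) :
    PrimrecRel fun e n : ℕ => IsSparse S {w | w ∈ stage n.unpair.2} e n.unpair.1 := by
  have hj : Primrec fun p : ℕ × ℕ => p.2.unpair.1 :=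
    Primrec.fst.comp (Primrec.unpair.comp Primrec.snd)
  have hs : Primrec fun p : ℕ × ℕ => p.2.unpair.2 :=
    Primrec.snd.comp (Primrec.unpair.comp Primrec.snd)
  have hend : Primrec fun p : ℕ × ℕ => blockEnd p.2.unpair.1 := primrec_blockEnd.comp hj
  have hcard := (primrec_card_unextendedStrings_filter hS).comp (hstage.comp hs) hend
  have hexp : Primrec fun p : ℕ × ℕ => blockEnd p.2.unpair.1 - (2 * p.1 + 1) :=
    Primrec.nat_sub.comp hend
      (Primrec.succ.comp (Primrec.nat_mul.comp (Primrec.const 2) Primrec.fst))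
  exact (Primrec.nat_lt.comp Primrec.fst hj).and (Primrec.nat_le.comp
    (Primrec.nat_add.comp (primrec_two_pow (Primrec.nat_mul.comp hj hj)) hcard)
    (primrec_two_pow hexp))

end Confining

section OptimalPrefix

variable {V : List Bool →. List Bool}

theorem exists_card_eq_of_optimalPrefix (hV : OptimalPrefix V) {h : ℕ → ℕ} (hh : Computable h) :
    ∃ c, ∀ e, ∃ Z : Finset (List Bool), Z.card = 2 ^ h e ∧
      ∀ w ∈ Z, w ∈ V.Dom ∧ w.length ≤ e + 1 + h e + c := by
  obtain ⟨c, hc⟩ := hV.2.2 _ (computable_selfDelimiting hh).ofOption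
    (prefixFreeSet_selfDelimiting h)
  refine ⟨c, fun e => ?_⟩
  have hdesc : ∀ x ∈ stringsFinset (h e),
      ∃ w, x ∈ V w ∧ w.length ≤ e + 1 + h e + c := fun x hx => by
    have hlen := mem_stringsFinset.1 hx
    have hmem : x ∈ (selfDelimiting h (tag e x) : Part (List Bool)) := by
      rw [selfDelimiting_tag hlen]
      exact Part.mem_some x
    have hcpx := cpx_le_length (D := fun y => (selfDelimiting h y : Part (List Bool))) hmem
    rw [length_tag, hlen] at hcpx
    refine exists_mem_of_cpx_le ((hc x).trans ?_)
    exact_mod_cast add_le_add_left hcpx (c : ℕ∞)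
  choose! f hf hflen using hdesc
  refine ⟨(stringsFinset (h e)).image f, ?_, Finset.forall_mem_image.2 fun x hx =>
    ⟨(PFun.mem_dom _ _).2 ⟨x, hf x hx⟩, hflen x hx⟩⟩
  rw [Finset.card_image_of_injOn, card_stringsFinset]
  intro x hx x' hx' heq
  exact Part.mem_unique (hf x hx) (heq ▸ hf x' hx')

theorem eventually_exists_block_eq (hV : OptimalPrefix V) :
    ∀ᶠ j in atTop, ∃ w ∈ V.Dom, block w = j := by
  obtain ⟨c, hc⟩ := exists_card_eq_of_optimalPrefix hV (h := fun e => e * e)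
    (Primrec.nat_mul.comp Primrec.id Primrec.id).to_comp
  filter_upwards [eventually_gt_atTop c] with j hj
  obtain ⟨Z, hZ, hZV⟩ := hc j
  obtain ⟨w, hw, hle⟩ : ∃ w ∈ Z, j * j ≤ w.length := by
    by_contra! hlt
    exact (card_lt_of_length_lt hlt).ne hZ
  obtain ⟨hwV, hlen⟩ := hZV w hw
  exact ⟨w, hwV, block_eq_iff.2 ⟨hle, by rw [blockEnd]; omega⟩⟩

theorem exists_computable_isSparse {S W : Set (List Bool)} {stage : ℕ → List (List Bool)}
    (hSp : PrimrecPred (· ∈ S)) (hstage : Primrec stage)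
    (hmono : Monotone fun s => {w | w ∈ stage s}) (hW : W = ⋃ s, {w | w ∈ stage s})
    (hsparse : ∀ e, ∃ j, IsSparse S W e j) :
    ∃ j : ℕ → ℕ, Computable j ∧ ∀ e, IsSparse S W e (j e) := by
  have hsearch (e : ℕ) : ∃ n : ℕ, IsSparse S {w | w ∈ stage n.unpair.2} e n.unpair.1 := by
    obtain ⟨j, hj⟩ := hsparse e
    obtain ⟨s, hs⟩ := (eventually_unextendedStrings_eq hmono (blockEnd j)).exists
    refine ⟨Nat.pair j s, ?_⟩
    rw [Nat.unpair_pair, IsSparse, hs, ← hW]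
    exact hj
  refine ⟨fun e => (Nat.find (hsearch e)).unpair.1, ?_,
    fun e => (Nat.find_spec (hsearch e)).anti ?_⟩
  · exact (Primrec.fst.comp Primrec.unpair).to_comp.comp
      (Computable.find (primrecRel_isSparse hSp hstage).computablePred hsearch)
  · rw [hW]
    exact Set.subset_iUnion (fun s => {w | w ∈ stage s}) _

theorem not_dom_subset_of_confining (hV : OptimalPrefix V) {S : Set (List Bool)}
    (hS : Confining S) (hSp : PrimrecPred (· ∈ S)) : ¬ V.Dom ⊆ S := by
  intro hVS
  obtain ⟨stage, hstage, hmono, hdom⟩ := exists_primrec_dom_eq_iUnion hV.1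
  obtain ⟨j, hj, hsparse⟩ := exists_computable_isSparse hSp hstage hmono hdom
    (hS.exists_isSparse hVS (eventually_exists_block_eq hV))
  have hlength : Computable fun e => blockEnd (j e) - (2 * e + 1) :=
    Primrec.nat_sub.to_comp.comp (primrec_blockEnd.to_comp.comp hj)
      (Primrec.succ.comp (Primrec.nat_mul.comp (Primrec.const 2) Primrec.id)).to_comp
  obtain ⟨c, hc⟩ := exists_card_eq_of_optimalPrefix hV hlength
  -- Tagging with the optimality constant itself makes the descriptions end within the block found.
  obtain ⟨Z, hZcard, hZ⟩ := hc c
  obtain ⟨hcj, hle⟩ := hsparse c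
  have hlen : c + 1 + (blockEnd (j c) - (2 * c + 1)) + c = blockEnd (j c) := by
    have : 2 * c + 1 ≤ blockEnd (j c) := by rw [blockEnd]; omega
    omega
  have hlt := hS.card_lt_add_card_filter hVS hV.2.1 (hlen ▸ hZ)
  omega

end OptimalPrefix

section Shrink

/-- A list of `2 ^ k` strings of length `k + 1`, chosen in `L` as long as `L` has such strings. -/
def preferred (k : ℕ) (L : List (List Bool)) : List (List Bool) :=
  ((strings (k + 1)).filter (· ∈ L) ++ (strings (k + 1)).filter (· ∉ L)).take (2 ^ k)

theorem nodup_preferred (k : ℕ) (L : List (List Bool)) : (preferred k L).Nodup := by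
  refine List.Nodup.sublist (List.take_sublist _ _) (((nodup_strings _).filter _).append
    ((nodup_strings _).filter _) fun x hx hx' => ?_)
  simp_all

theorem length_preferred (k : ℕ) (L : List (List Bool)) : (preferred k L).length = 2 ^ k := by
  have hsplit := (strings (k + 1)).length_eq_length_filter_add (· ∈ L)
  rw [length_strings, pow_succ] at hsplit
  simp only [preferred, List.length_take, List.length_append, decide_not]
  omega

theorem length_of_mem_preferred {k : ℕ} {L : List (List Bool)} {x : List Bool}
    (hx : x ∈ preferred k L) : x.length = k + 1 := by
  have := List.mem_of_mem_take hx
  simp only [List.mem_append, List.mem_filter, mem_strings] at this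
  tauto

theorem mem_of_mem_preferred {k : ℕ} {L : Finset (List Bool)} (hL : L ⊆ stringsFinset (k + 1))
    (hk : 2 ^ k ≤ L.card) {x : List Bool} (hx : x ∈ preferred k L.toList) : x ∈ L := by
  have hlen : 2 ^ k ≤ ((strings (k + 1)).filter (· ∈ L.toList)).length := by
    refine hk.trans ?_
    rw [← Finset.length_toList]
    refine (L.nodup_toList.subperm fun y hy => ?_).length_le
    simpa [mem_strings] using ⟨mem_stringsFinset.1 (hL (Finset.mem_toList.1 hy)),
      Finset.mem_toList.1 hy⟩
  rw [preferred, List.take_append_of_le_length hlen] at hx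
  simpa using (List.mem_filter.1 (List.mem_of_mem_take hx)).2

theorem primrec_preferred : Primrec₂ preferred := by
  have hmem : PrimrecRel fun (x : List Bool) (L : List (List Bool)) => x ∈ L :=
    ((PrimrecRel.exists_mem_list (R := fun a b : List Bool => a = b) Primrec.eq).comp
      Primrec.snd Primrec.fst).of_eq fun p => by simp
  have hnot : PrimrecRel fun (x : List Bool) (L : List (List Bool)) => x ∉ L := hmem.not
  have hs : Primrec fun p : ℕ × List (List Bool) => strings (p.1 + 1) :=
    primrec_strings.comp (Primrec.succ.comp Primrec.fst)
  exact Primrec.list_take.comp (primrec_two_pow Primrec.fst)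
    (Primrec.list_append.comp (hmem.listFilter.comp hs Primrec.snd)
      (hnot.listFilter.comp hs Primrec.snd))

/-- Replaces a prefix in `preferred k L` by the string of length `k` that has the same index in the
list of all of these, which shortens the string by one bit. -/
def shrinkPrefix (k : ℕ) (L : List (List Bool)) (y : List Bool) : Option (List Bool) :=
  (strings k)[(preferred k L).idxOf (y.take (k + 1))]?.map (· ++ y.drop (k + 1))

theorem isSome_shrinkPrefix_iff {k : ℕ} {L : List (List Bool)} {y : List Bool} :
    (shrinkPrefix k L y).isSome ↔ y.take (k + 1) ∈ preferred k L := by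
  rw [shrinkPrefix, Option.isSome_map, ← List.idxOf_lt_length_iff, length_preferred,
    ← length_strings]
  simp

theorem exists_shrinkPrefix_eq {k : ℕ} (L : List (List Bool)) {p : List Bool} (hk : k ≤ p.length) :
    ∃ y, shrinkPrefix k L y = some p ∧ y.length = p.length + 1 := by
  obtain ⟨i, hi, hip⟩ := List.mem_iff_getElem.1 (mem_strings.2 (List.length_take_of_le hk))
  have hi' : i < (preferred k L).length := by rwa [length_preferred, ← length_strings]
  have hlen := length_of_mem_preferred (List.getElem_mem hi')
  refine ⟨(preferred k L)[i] ++ p.drop k, ?_, by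
    rw [List.length_append, hlen, List.length_drop]
    omega⟩
  rw [shrinkPrefix, List.take_left' hlen, List.drop_left' hlen,
    (nodup_preferred k L).idxOf_getElem i hi', List.getElem?_eq_getElem hi, hip, Option.map_some,
    List.take_append_drop]

/-- The length parameter `k` of block `j`, where `j` codes `k`, `L` and a number without meaning
that lets every pair of `k` and `L` recur. -/
def blockWidth (j : ℕ) : ℕ := j.unpair.1

/-- The list `L` coded by `j`, from which the prefixes shortened in block `j` are chosen. -/
def blockList (j : ℕ) : List (List Bool) :=
  (decode (α := List (List Bool)) j.unpair.2.unpair.1).getD []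

theorem frequently_blockWidth_eq_and_blockList_eq (k : ℕ) (L : List (List Bool)) :
    ∃ᶠ j in atTop, blockWidth j = k ∧ blockList j = L :=
  frequently_atTop.2 fun N => ⟨Nat.pair k (Nat.pair (encode L) N),
    (Nat.right_le_pair _ _).trans (Nat.right_le_pair _ _), by simp [blockWidth, blockList]⟩

/-- Removes one bit from a string, according to the prefixes preferred in its block. -/
def shrink (y : List Bool) : Option (List Bool) :=
  shrinkPrefix (blockWidth (block y)) (blockList (block y)) y

theorem exists_shrink_eq (p : List Bool) : ∃ y, shrink y = some p ∧ y.length = p.length + 1 := by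
  set j := Nat.sqrt (p.length + 1)
  have hwidth : blockWidth j ≤ p.length := by
    have hlt : blockWidth j < j := Nat.unpair_lt (Nat.sqrt_pos.2 p.length.succ_pos)
    have hle : j ≤ p.length + 1 := Nat.sqrt_le_self _
    omega
  obtain ⟨y, hy, hlen⟩ := exists_shrinkPrefix_eq (blockList j) hwidth
  exact ⟨y, by rwa [shrink, block, hlen], hlen⟩

theorem primrec_shrink : Primrec shrink := by
  have hwidth : Primrec fun y => blockWidth (block y) :=
    Primrec.fst.comp (Primrec.unpair.comp primrec_block)
  have hlist : Primrec fun y => blockList (block y) :=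
    Primrec.option_getD.comp (Primrec.decode.comp (Primrec.fst.comp (Primrec.unpair.comp
      (Primrec.snd.comp (Primrec.unpair.comp primrec_block))))) (Primrec.const [])
  have hsucc := Primrec.succ.comp hwidth
  have hidx : Primrec₂ fun (x : List Bool) (l : List (List Bool)) => l.idxOf x := by
    convert Primrec.list_idxOf (α := List Bool) using 5
  refine Primrec.option_map (Primrec.list_getElem?.comp (primrec_strings.comp hwidth)
    (hidx.comp (Primrec.list_take.comp hsucc Primrec.id)
      (primrec_preferred.comp hwidth hlist))) ?_
  exact Primrec.list_append.comp Primrec.snd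
    ((Primrec.list_drop.comp hsucc Primrec.id).comp Primrec.fst)

theorem primrecPred_isSome_shrink : PrimrecPred (· ∈ {y | (shrink y).isSome}) :=
  Primrec.eq.comp (Primrec.option_isSome.comp primrec_shrink) (Primrec.const true)

theorem confining_isSome_shrink : Confining {y | (shrink y).isSome} where
  mem_of_prefix {y z} hy hyz hblock := by
    rw [Set.mem_ofPred_eq, shrink, isSome_shrinkPrefix_iff] at hy ⊢
    have hlen := length_of_mem_preferred hy
    rw [List.length_take] at hlen
    have htake : z.take (blockWidth (block y) + 1) = y.take (blockWidth (block y) + 1) := by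
      obtain ⟨t, rfl⟩ := hyz
      exact List.take_append_of_le_length (by omega)
    rwa [← hblock, htake]
  frequently_take_mem {k L} hL hk := by
    refine (frequently_blockWidth_eq_and_blockList_eq k L.toList).mono ?_
    rintro _ ⟨hwidth, hlist⟩ y hy rfl
    rw [Set.mem_ofPred_eq, shrink, isSome_shrinkPrefix_iff, hwidth, hlist] at hy
    exact mem_of_mem_preferred hL hk hy

end Shrink

end Decompressor

open Decompressor

/-- there is an optimal plain decompressor `D` such that no optimal
prefix-free decompressor has its domain contained in the domain of `D`. -/
theorem stmt0 :
    ∃ D : List Bool →. List Bool, OptimalPlain D ∧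
      ∀ V : List Bool →. List Bool, OptimalPrefix V → ¬ V.Dom ⊆ D.Dom := by
  have hD : OptimalPlain fun y => (shrink y : Part (List Bool)).bind universal :=
    optimalPlain_bind_option optimalPlain_universal primrec_shrink.to_comp fun p => by
      obtain ⟨y, hy, hlen⟩ := exists_shrink_eq p
      exact ⟨y, hy, hlen.le⟩
  refine ⟨_, hD, fun V hV hVD =>
    not_dom_subset_of_confining hV confining_isSome_shrink primrecPred_isSome_shrink ?_⟩
  rw [← dom_coe_option]
  exact fun w hw => (Part.bind_dom.1 (hVD hw)).1
end

section
/- There exists a computably decidable set A of binary strings such that (1) for every n, the number of strings of length n in A is at least 2^n/3 (i.e., 3·|A ∩ {0,1}^n| ≥ 2^n), and (2) for every optimal prefix-free decompressor V, the domain of V is not a subset of A. -/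
open scoped Classical

/-!
The `n`-th block of `A` consists of the strings of length between `n²` and `n² + 2n`. Let `n` code a
depth `k` and a list `E` of at most half of the strings of length `k`, and let `A` omit exactly the
strings of the `n`-th block that extend an element of `E`. Then `A` is decidable and contains at
least half of the strings of every length.

Suppose that an optimal prefix-free `V` has its domain `S` inside `A`, and let `U m` be the set of
strings of length `m` that are not proper prefixes of elements of `S`. By optimality, `S` meets all
but finitely many blocks. A block whose list is the complement of `U m` is disjoint from `S`, so
this complement cannot be forbidden: for large `m` it contains more than half of the strings, and
`U m` contains less than half.

Hence `U m` itself is forbidden in some block `n`. Let `N = n² + 2n`. The cylinder over `U m` lies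
in `U N \ A` and has the density of `U m`, so `U N` is denser than `U m` by the density of
`U N ∩ A`, which is bounded below by a positive constant independent of `n`. Indeed, for a
constant `c` we can search for an `n` with `|U N ∩ A|` small, a condition that is confirmed by
enumerating `S`, and then assign to the single integer `c` a header followed by strings of length
`N - 2c - 1`. Taking `c` to be the overhead of `V` on the resulting prefix-free machine, `V` must
have `2^(N - 2c - 1)` descriptions of length at most `N`. Fewer than `2^(n²)` of them are shorter
than the block `n`, and padding the others with zeros shows that `U N ∩ A` was not small. Iterating,
the density of `U m` grows without bound, a contradiction.
-/

open Encodable Filter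

section Cube

/-- The binary strings of length `n` as a list, so that computable functions can range over
them. -/
def bitStrings : ℕ → List (List Bool)
  | 0 => [[]]
  | n + 1 => (bitStrings n).map (List.cons false) ++ (bitStrings n).map (List.cons true)

lemma mem_bitStrings {n : ℕ} {x : List Bool} : x ∈ bitStrings n ↔ x.length = n := by
  induction n generalizing x with
  | zero => simp [bitStrings]
  | succ n ih =>
    cases x with
    | nil => simp [bitStrings]
    | cons b x => cases b <;> simp [bitStrings, ih]

lemma nodup_bitStrings (n : ℕ) : (bitStrings n).Nodup := by
  induction n with
  | zero => simp [bitStrings]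
  | succ n ih =>
    refine (ih.map List.cons_injective).append (ih.map List.cons_injective) ?_
    simp [List.disjoint_left]

lemma length_bitStrings (n : ℕ) : (bitStrings n).length = 2 ^ n := by
  induction n with
  | zero => rfl
  | succ n ih => simp [bitStrings, ih, pow_succ, mul_two]

lemma primrec_bitStrings : Primrec bitStrings := by
  have map_cons (b : Bool) :
      Primrec fun a : ℕ × List (List Bool) => a.2.map (List.cons b) :=
    Primrec.list_map Primrec.snd (Primrec.list_cons.comp (Primrec.const b) Primrec.snd).to₂
  refine (Primrec.nat_rec₁ [[]]
    (Primrec.list_append.comp (map_cons false) (map_cons true)).to₂).of_eq fun n => ?_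
  induction n with
  | zero => rfl
  | succ n ih => simp only [bitStrings, ← ih]

/-- The Hamming cube `{0,1}ⁿ`, as a finite set of strings. -/
def cube (n : ℕ) : Finset (List Bool) := (bitStrings n).toFinset

lemma mem_cube {n : ℕ} {x : List Bool} : x ∈ cube n ↔ x.length = n := by
  rw [cube, List.mem_toFinset, mem_bitStrings]

lemma card_cube (n : ℕ) : (cube n).card = 2 ^ n := by
  rw [cube, List.toFinset_card_of_nodup (nodup_bitStrings n), length_bitStrings]

lemma card_lt_two_pow_of_forall_length_lt {P : Finset (List Bool)} {n : ℕ}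
    (h : ∀ p ∈ P, p.length < n) : P.card < 2 ^ n := by
  have hsub : P ⊆ (Finset.range n).biUnion cube := fun p hp =>
    Finset.mem_biUnion.2 ⟨p.length, Finset.mem_range.2 (h p hp), mem_cube.2 rfl⟩
  calc P.card ≤ ∑ i ∈ Finset.range n, (cube i).card :=
        (Finset.card_le_card hsub).trans Finset.card_biUnion_le
    _ = ∑ i ∈ Finset.range n, 2 ^ i := by simp only [card_cube]
    _ < 2 ^ n := Nat.geomSum_lt le_rfl (by simp)

/-- The level `n` of the cylinder over `E`: the strings of length `n` whose prefix of length `k`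
lies in `E`. -/
def cylinder (E : Finset (List Bool)) (k n : ℕ) : Finset (List Bool) :=
  {x ∈ cube n | x.take k ∈ E}

lemma mem_cylinder {E : Finset (List Bool)} {k n : ℕ} {x : List Bool} :
    x ∈ cylinder E k n ↔ x.length = n ∧ x.take k ∈ E := by
  rw [cylinder, Finset.mem_filter, mem_cube]

lemma card_cylinder (E : Finset (List Bool)) {k n : ℕ} (hkn : k ≤ n) :
    (cylinder E k n).card = (E ∩ cube k).card * 2 ^ (n - k) := by
  rw [← card_cube (n - k), ← Finset.card_product]
  refine Finset.card_nbij' (fun x => (x.take k, x.drop k)) (fun a => a.1 ++ a.2) ?_ ?_ ?_ ?_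
  · intro x hx
    obtain ⟨rfl, htake⟩ := mem_cylinder.1 hx
    simp [mem_cube, htake, hkn]
  · rintro ⟨u, w⟩ h
    simp only [Finset.coe_product, Set.mem_prod, Finset.mem_coe, Finset.mem_inter, mem_cube] at h
    obtain ⟨⟨hu, rfl⟩, hw⟩ := h
    simp [mem_cylinder, hu, hw, hkn]
  · intro x _
    exact List.take_append_drop k x
  · rintro ⟨u, w⟩ h
    simp only [Finset.coe_product, Set.mem_prod, Finset.mem_coe, Finset.mem_inter, mem_cube] at h
    obtain ⟨⟨-, rfl⟩, -⟩ := h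
    simp

end Cube

section Unextended

variable {S : Set (List Bool)} {n : ℕ} {u : List Bool}

/-- The strings of length `n` that are not proper prefixes of elements of `S`. When `S` is
recursively enumerable, so is the complement of this set. -/
noncomputable def unextended (S : Set (List Bool)) (n : ℕ) : Finset (List Bool) :=
  {u ∈ cube n | ∀ p ∈ S, u <+: p → u = p}

lemma mem_unextended : u ∈ unextended S n ↔ u.length = n ∧ ∀ p ∈ S, u <+: p → u = p := by
  rw [unextended, Finset.mem_filter, mem_cube]

lemma unextended_subset_cube (S : Set (List Bool)) (n : ℕ) : unextended S n ⊆ cube n :=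
  Finset.filter_subset _ _

lemma unextended_anti {T : Set (List Bool)} (h : T ⊆ S) (n : ℕ) :
    unextended S n ⊆ unextended T n := fun _ hu =>
  mem_unextended.2 ⟨(mem_unextended.1 hu).1, fun p hp => (mem_unextended.1 hu).2 p (h hp)⟩

lemma take_notMem_unextended {p : List Bool} (hp : p ∈ S) (hn : n < p.length) :
    p.take n ∉ unextended S n := fun h => by
  have hlen := congrArg List.length ((mem_unextended.1 h).2 p hp (List.take_prefix n p))
  rw [List.length_take] at hlen
  omega

lemma cylinder_unextended_subset (S : Set (List Bool)) {m n : ℕ} (hmn : m ≤ n) :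
    cylinder (unextended S m) m n ⊆ unextended S n := by
  intro x hx
  obtain ⟨rfl, hxm⟩ := mem_cylinder.1 hx
  refine mem_unextended.2 ⟨rfl, fun p hp hxp => hxp.eq_of_length_le ?_⟩
  have htake := (mem_unextended.1 hxm).2 p hp ((List.take_prefix m x).trans hxp)
  rw [← htake, List.length_take]
  exact min_le_right _ _

lemma card_unextended_mul_add_le {A : Set (List Bool)} {m : ℕ} (hmn : m ≤ n)
    (hA : ∀ x ∈ cylinder (unextended S m) m n, x ∉ A) :
    (unextended S m).card * 2 ^ (n - m) + {u ∈ unextended S n | u ∈ A}.card ≤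
      (unextended S n).card := by
  have hcard := card_cylinder (unextended S m) hmn
  rw [Finset.inter_eq_left.2 (unextended_subset_cube S m)] at hcard
  rw [← hcard, add_comm, ← Finset.card_filter_add_card_filter_not (s := unextended S n) (· ∈ A)]
  gcongr
  exact fun x hx => Finset.mem_filter.2 ⟨cylinder_unextended_subset S hmn hx, hA x hx⟩

lemma PrefixFreeSet.append_mem_unextended (hS : PrefixFreeSet S) {p : List Bool} (hp : p ∈ S)
    (w : List Bool) : p ++ w ∈ unextended S (p ++ w).length := by
  refine mem_unextended.2 ⟨rfl, fun q hq hpq => hpq.eq_of_length_le ?_⟩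
  obtain rfl := hS p hp q hq ((List.prefix_append p w).trans hpq)
  simp

lemma PrefixFreeSet.card_le_card_unextended (hS : PrefixFreeSet S) {A : Set (List Bool)}
    {P : Finset (List Bool)} (hPS : ↑P ⊆ S) (hn : ∀ p ∈ P, p.length ≤ n)
    (hA : ∀ p ∈ P, p ++ List.replicate (n - p.length) false ∈ A) :
    P.card ≤ {u ∈ unextended S n | u ∈ A}.card := by
  refine Finset.card_le_card_of_injOn (fun p => p ++ List.replicate (n - p.length) false) ?_ ?_
  · intro p hp
    have hmem := hS.append_mem_unextended (hPS hp) (List.replicate (n - p.length) false)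
    rw [List.length_append, List.length_replicate, Nat.add_sub_cancel' (hn p hp)] at hmem
    exact Finset.mem_filter.2 ⟨hmem, hA p hp⟩
  · intro p hp q hq hpq
    rcases List.prefix_or_prefix_of_prefix ⟨_, hpq⟩ (List.prefix_append q _) with h | h
    · exact hS p (hPS hp) q (hPS hq) h
    · exact (hS q (hPS hq) p (hPS hp) h).symm

end Unextended

section Computability

lemma primrec_nat_pow : Primrec₂ ((· ^ ·) : ℕ → ℕ → ℕ) :=
  Primrec₂.unpaired'.1 Nat.Primrec.pow

lemma exists_partrec_choice {α β : Type*} [Primcodable α] [Primcodable β] {R : α × β → Prop}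
    (hR : ComputablePred R) :
    ∃ g : α →. β, Partrec g ∧ (∀ a, ∀ b ∈ g a, R (a, b)) ∧ ∀ a b, R (a, b) → (g a).Dom := by
  obtain ⟨_, hR⟩ := hR
  let f : α → ℕ → Option β := fun a t =>
    (decode t : Option β).bind fun b => bif decide (R (a, b)) then some b else none
  have hf : Computable₂ f := by
    have htest : Computable₂ fun (x : α × ℕ) (b : β) =>
        bif decide (R (x.1, b)) then some b else none :=
      (Computable.cond (hR.comp ((Computable.fst.comp Computable.fst).pair Computable.snd))
        (Computable.option_some.comp Computable.snd) (Computable.const none)).to₂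
    exact (Computable.option_bind (Computable.decode.comp Computable.snd) htest).to₂
  refine ⟨fun a => Nat.rfindOpt (f a), Partrec.rfindOpt hf, fun a b hb => ?_, fun a b hab => ?_⟩
  · obtain ⟨t, ht⟩ := Nat.rfindOpt_spec hb
    obtain ⟨b', -, hb'⟩ := Option.bind_eq_some_iff.1 ht
    by_cases h : R (a, b') <;> simp_all
  · exact Nat.rfindOpt_dom.2 ⟨encode b, b, by simp [f, hab]⟩

lemma exists_primrec_enum_dom {α σ : Type*} [Primcodable α] [Primcodable σ] {f : α →. σ}
    (hf : Partrec f) :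
    ∃ e : ℕ → Option α, Primrec e ∧ ∀ a, a ∈ f.Dom ↔ ∃ i, e i = some a := by
  obtain ⟨c, hc⟩ := Nat.Partrec.Code.exists_code.1 hf
  have mem_eval (a : α) (y : ℕ) : y ∈ c.eval (encode a) ↔ ∃ b ∈ f a, encode b = y := by
    simp only [hc, encodek, Part.coe_some, Part.bind_some, Part.mem_map_iff]
  refine ⟨fun i => (Nat.Partrec.Code.evaln i.unpair.1 c i.unpair.2).bind
    fun _ => decode i.unpair.2, ?_, fun a => ⟨fun ha => ?_, ?_⟩⟩
  · have fst_unpair : Primrec fun i : ℕ => i.unpair.1 := Primrec.fst.comp Primrec.unpair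
    have snd_unpair : Primrec fun i : ℕ => i.unpair.2 := Primrec.snd.comp Primrec.unpair
    exact Primrec.option_bind (Nat.Partrec.Code.primrec_evaln.comp
        ((fst_unpair.pair (Primrec.const c)).pair snd_unpair))
      (Primrec.decode.comp (snd_unpair.comp Primrec.fst)).to₂
  · obtain ⟨b, hb⟩ := (PFun.mem_dom _ _).1 ha
    obtain ⟨k, hk⟩ := Nat.Partrec.Code.evaln_complete.1 ((mem_eval a _).2 ⟨b, hb, rfl⟩)
    exact ⟨Nat.pair k (encode a), by simp [Option.mem_def.1 hk]⟩
  · rintro ⟨i, hi⟩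
    obtain ⟨y, hy, ha⟩ := Option.bind_eq_some_iff.1 hi
    have hy := Nat.Partrec.Code.evaln_sound hy
    simp only [hc, ha, Part.coe_some, Part.bind_some, Part.mem_map_iff] at hy
    obtain ⟨b, hb, -⟩ := hy
    exact (PFun.mem_dom _ _).2 ⟨b, hb⟩

lemma primrec_card_unextended {A : Set (List Bool)} (hA : PrimrecPred (· ∈ A)) :
    Primrec₂ fun (T : List (List Bool)) n => {u ∈ unextended {p | p ∈ T} n | u ∈ A}.card := by
  have extends_imp : PrimrecRel fun p u : List Bool => u = p.take u.length → u = p :=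
    ((Primrec.eq.comp Primrec.snd (Primrec.list_take.comp
      (Primrec.list_length.comp Primrec.snd) Primrec.fst)).not.or
    (Primrec.eq.comp Primrec.snd Primrec.fst)).of_eq fun _ => imp_iff_not_or.symm
  have selected : PrimrecRel fun (u : List Bool) (T : List (List Bool)) =>
      (∀ p ∈ T, u = p.take u.length → u = p) ∧ u ∈ A :=
    (extends_imp.forall_mem_list.comp Primrec.snd Primrec.fst).and (hA.comp Primrec.fst)
  refine (Primrec.list_length.comp (selected.listFilter.comp
    (primrec_bitStrings.comp Primrec.snd) Primrec.fst)).to₂.of_eq fun T n => ?_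
  rw [← List.toFinset_card_of_nodup ((nodup_bitStrings n).filter _)]
  congr 1
  ext u
  simp [mem_unextended, mem_bitStrings, List.prefix_iff_eq_take, and_assoc]

lemma exists_unextended_filterMap_eq {S : Set (List Bool)} {e : ℕ → Option (List Bool)}
    (he : ∀ p, p ∈ S ↔ ∃ i, e i = some p) (n : ℕ) :
    ∃ L : List ℕ, unextended {p | p ∈ L.filterMap e} n = unextended S n := by
  have hwitness (u : List Bool) :
      ∃ i, (∃ p ∈ S, u <+: p ∧ u ≠ p) → ∃ p, e i = some p ∧ u <+: p ∧ u ≠ p := by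
    by_cases h : ∃ p ∈ S, u <+: p ∧ u ≠ p
    · obtain ⟨p, hp, hup⟩ := h
      obtain ⟨i, hi⟩ := (he p).1 hp
      exact ⟨i, fun _ => ⟨p, hi, hup⟩⟩
    · exact ⟨0, fun h' => absurd h' h⟩
  choose i hi using hwitness
  refine ⟨(bitStrings n).map i, subset_antisymm (fun u hu => ?_) (unextended_anti ?_ n)⟩
  · obtain ⟨hlen, hu⟩ := mem_unextended.1 hu
    refine mem_unextended.2 ⟨hlen, fun p hp hup => ?_⟩
    by_contra hne
    obtain ⟨q, hq, huq, hne'⟩ := hi u ⟨p, hp, hup, hne⟩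
    exact hne' (hu q (List.mem_filterMap.2
      ⟨i u, List.mem_map_of_mem (mem_bitStrings.2 hlen), hq⟩) huq)
  · intro p hp
    obtain ⟨j, -, hj⟩ := List.mem_filterMap.1 hp
    exact (he p).2 ⟨j, hj⟩

lemma exists_partrec_card_unextended_lt {α β σ : Type*} [Primcodable α] [Primcodable β]
    [Primcodable σ] {f : List Bool →. σ} (hf : Partrec f) {A : Set (List Bool)}
    (hA : PrimrecPred (· ∈ A)) {N t : α → β → ℕ} (hN : Primrec₂ N) (ht : Primrec₂ t) :
    ∃ g : α →. β, Partrec g ∧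
      (∀ a, ∀ b ∈ g a, {u ∈ unextended f.Dom (N a b) | u ∈ A}.card < t a b) ∧
      ∀ a b, {u ∈ unextended f.Dom (N a b) | u ∈ A}.card < t a b → (g a).Dom := by
  obtain ⟨e, he, hdom⟩ := exists_primrec_enum_dom hf
  let R : α × β × List ℕ → Prop := fun x =>
    {u ∈ unextended {p | p ∈ x.2.2.filterMap e} (N x.1 x.2.1) | u ∈ A}.card < t x.1 x.2.1
  have hR : PrimrecPred R := by
    have hb : Primrec fun x : α × β × List ℕ => x.2.1 := Primrec.fst.comp Primrec.snd
    have hT : Primrec fun x : α × β × List ℕ => x.2.2.filterMap e :=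
      Primrec.listFilterMap (Primrec.snd.comp Primrec.snd) (he.comp Primrec.snd).to₂
    exact Primrec.nat_lt.comp
      ((primrec_card_unextended hA).comp hT (hN.comp Primrec.fst hb)) (ht.comp Primrec.fst hb)
  obtain ⟨_, hR⟩ := hR
  obtain ⟨g, hg, hsound, hcomplete⟩ := exists_partrec_choice ⟨_, hR.to_comp⟩
  refine ⟨fun a => (g a).map Prod.fst, hg.map (Computable.fst.comp Computable.snd).to₂,
    fun a b hb => ?_, fun a b hab => ?_⟩
  · obtain ⟨⟨b, L⟩, hbL, rfl⟩ := (Part.mem_map_iff _).1 hb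
    refine (Finset.card_le_card (Finset.filter_subset_filter _ (unextended_anti ?_ _))).trans_lt
      (hsound a _ hbL)
    intro p hp
    obtain ⟨j, -, hj⟩ := List.mem_filterMap.1 hp
    exact (hdom p).2 ⟨j, hj⟩
  · obtain ⟨L, hL⟩ := exists_unextended_filterMap_eq hdom (N a b)
    exact hcomplete a (b, L) (by simpa only [R, hL] using hab)

end Computability

section Decompressors

lemma Cpx_le_natCast_iff {D : List Bool →. List Bool} {x : List Bool} {n : ℕ} :
    Cpx D x ≤ n ↔ ∃ y, x ∈ D y ∧ y.length ≤ n := by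
  constructor
  · intro h
    have hne : {m : ℕ∞ | ∃ y : List Bool, x ∈ D y ∧ (y.length : ℕ∞) = m}.Nonempty := by
      by_contra hempty
      rw [Cpx, Set.not_nonempty_iff_eq_empty.1 hempty, sInf_empty, top_le_iff] at h
      exact ENat.natCast_ne_top n h
    obtain ⟨y, hy, hlen⟩ := csInf_mem hne
    exact ⟨y, hy, by rw [Cpx, ← hlen] at h; exact_mod_cast h⟩
  · rintro ⟨y, hy, hlen⟩
    have hle : Cpx D x ≤ y.length := sInf_le ⟨y, hy, rfl⟩
    exact hle.trans (Nat.cast_le.2 hlen)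

lemma OptimalPrefix.exists_simulation {V D : List Bool →. List Bool} (hV : OptimalPrefix V)
    (hD : Partrec D) (hDom : PrefixFreeSet D.Dom) :
    ∃ c, ∀ y, ∀ x ∈ D y, ∃ p, x ∈ V p ∧ p.length ≤ y.length + c := by
  obtain ⟨c, hc⟩ := hV.2.2 D hD hDom
  refine ⟨c, fun y x hx => Cpx_le_natCast_iff.1 ?_⟩
  calc Cpx V x ≤ Cpx D x + c := hc x
    _ ≤ y.length + c := by gcongr; exact Cpx_le_natCast_iff.2 ⟨y, hx, le_rfl⟩
    _ = (y.length + c : ℕ) := (Nat.cast_add _ _).symm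

/-- The string `0ⁱ1y`: the number `i`, self-delimited in unary, followed by `y`. -/
def unaryHeader (i : ℕ) (y : List Bool) : List Bool := List.replicate i false ++ true :: y

lemma length_unaryHeader (i : ℕ) (y : List Bool) :
    (unaryHeader i y).length = y.length + i + 1 := by
  simp only [unaryHeader, List.length_append, List.length_replicate, List.length_cons]
  omega

lemma findIdx_unaryHeader (i : ℕ) (y : List Bool) : (unaryHeader i y).findIdx id = i := by
  induction i with
  | zero => simp [unaryHeader, List.findIdx_cons]
  | succ i ih => simpa [unaryHeader, List.replicate_succ, List.findIdx_cons] using ih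

lemma unaryHeader_injective (i : ℕ) : Function.Injective (unaryHeader i) := fun y y' h => by
  simpa [unaryHeader] using h

/-- The identity restricted to the strings `0ⁱ1y` with `|y| = ℓ i`. The length of such a string is
determined by its header, so this decompressor is prefix-free for every partial function `ℓ`. -/
def headerMachine (ℓ : ℕ →. ℕ) : List Bool →. List Bool := fun z =>
  (ℓ (z.findIdx id)).bind fun l =>
    ((if z.length = l + z.findIdx id + 1 then some z else none : Option (List Bool)) :
      Part (List Bool))

lemma mem_headerMachine {ℓ : ℕ →. ℕ} {z x : List Bool} :
    x ∈ headerMachine ℓ z ↔ x = z ∧ ∃ l ∈ ℓ (z.findIdx id), z.length = l + z.findIdx id + 1 := by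
  simp only [headerMachine, Part.mem_bind_iff, Part.mem_ofOption, Option.mem_def,
    Option.ite_none_right_eq_some, Option.some.injEq]
  tauto

lemma unaryHeader_mem_headerMachine {ℓ : ℕ →. ℕ} {i : ℕ} {y : List Bool} (h : y.length ∈ ℓ i) :
    unaryHeader i y ∈ headerMachine ℓ (unaryHeader i y) :=
  mem_headerMachine.2 ⟨rfl, y.length, by rwa [findIdx_unaryHeader],
    by rw [findIdx_unaryHeader, length_unaryHeader]⟩

lemma partrec_headerMachine {ℓ : ℕ →. ℕ} (hℓ : Partrec ℓ) : Partrec (headerMachine ℓ) := by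
  have hidx : Primrec fun z : List Bool => z.findIdx id :=
    Primrec.list_findIdx Primrec.id Primrec.snd.to₂
  have hguard : Primrec fun a : List Bool × ℕ =>
      if a.1.length = a.2 + a.1.findIdx id + 1 then some a.1 else none :=
    Primrec.ite (Primrec.eq.comp (Primrec.list_length.comp Primrec.fst)
      (Primrec.succ.comp (Primrec.nat_add.comp Primrec.snd (hidx.comp Primrec.fst))))
      (Primrec.option_some.comp Primrec.fst) (Primrec.const none)
  exact (hℓ.comp hidx.to_comp).bind hguard.to_comp.ofOption.to₂

lemma prefixFreeSet_dom_headerMachine (ℓ : ℕ →. ℕ) : PrefixFreeSet (headerMachine ℓ).Dom := by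
  intro p hp q hq hpq
  obtain ⟨_, hp⟩ := (PFun.mem_dom _ _).1 hp
  obtain ⟨_, hq⟩ := (PFun.mem_dom _ _).1 hq
  obtain ⟨-, l, hl, hlen⟩ := mem_headerMachine.1 hp
  obtain ⟨-, l', hl', hlen'⟩ := mem_headerMachine.1 hq
  have hidx : q.findIdx id = p.findIdx id := by
    obtain ⟨w, rfl⟩ := hpq
    rw [List.findIdx_append, if_pos (by omega)]
  rw [hidx] at hl' hlen'
  obtain rfl := Part.mem_unique hl hl'
  exact hpq.eq_of_length (hlen.trans hlen'.symm)

lemma OptimalPrefix.exists_finset_card_eq_two_pow {V : List Bool →. List Bool}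
    (hV : OptimalPrefix V) {ℓ : ℕ →. ℕ} (hℓ : Partrec ℓ) :
    ∃ c, ∀ i, ∀ l ∈ ℓ i, ∃ P : Finset (List Bool), ↑P ⊆ V.Dom ∧ P.card = 2 ^ l ∧
      ∀ p ∈ P, p.length ≤ l + i + 1 + c := by
  obtain ⟨c, hc⟩ :=
    hV.exists_simulation (partrec_headerMachine hℓ) (prefixFreeSet_dom_headerMachine ℓ)
  refine ⟨c, fun i l hl => ?_⟩
  have hdescr : ∀ y ∈ cube l, ∃ p, unaryHeader i y ∈ V p ∧ p.length ≤ l + i + 1 + c := by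
    intro y hy
    rw [mem_cube] at hy
    have hmem : y.length ∈ ℓ i := by rwa [hy]
    simpa only [length_unaryHeader, hy] using hc _ _ (unaryHeader_mem_headerMachine hmem)
  choose! f hf hlen using hdescr
  have hinj : Set.InjOn f (cube l) := fun y hy y' hy' h =>
    unaryHeader_injective i (Part.mem_unique (hf y hy) (h ▸ hf y' hy'))
  refine ⟨(cube l).image f, ?_, by rw [Finset.card_image_of_injOn hinj, card_cube],
    Finset.forall_mem_image.2 hlen⟩
  rw [Finset.coe_image, Set.image_subset_iff]
  exact fun y hy => (PFun.mem_dom _ _).2 ⟨_, hf y hy⟩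

end Decompressors

lemma sqrt_eq_iff_mem_Icc {m n : ℕ} : m.sqrt = n ↔ m ∈ Set.Icc (n ^ 2) (n ^ 2 + 2 * n) := by
  rw [eq_comm, Nat.eq_sqrt', add_sq, Set.mem_Icc]
  omega

section AvoidanceSet

/-- The number `n = ⟨k, E⟩` codes a depth `k` and a list `E` of strings; this is the list `E`,
replaced by `[]` when `E` has more than half as many entries as there are strings of length
`k`. -/
def forbiddenPrefixes (n : ℕ) : List (List Bool) :=
  let E : List (List Bool) := (decode n.unpair.2).getD []
  if 2 * E.length ≤ 2 ^ n.unpair.1 then E else []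

/-- The strings `x` that do not start with a forbidden prefix of the block of `x`, where the `n`-th
block consists of the lengths from `n²` to `n² + 2n`, i.e. those with integer square root `n`. -/
def avoidanceSet : Set (List Bool) :=
  {x | x.take x.length.sqrt.unpair.1 ∉ forbiddenPrefixes x.length.sqrt}

lemma unpair_fst_sqrt_le (m : ℕ) : m.sqrt.unpair.1 ≤ m :=
  (Nat.unpair_left_le _).trans (Nat.sqrt_le_self _)

lemma primrec_forbiddenPrefixes : Primrec forbiddenPrefixes := by
  have hE : Primrec fun n : ℕ => ((decode n.unpair.2).getD [] : List (List Bool)) :=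
    Primrec.option_getD.comp (Primrec.decode.comp (Primrec.snd.comp Primrec.unpair))
      (Primrec.const [])
  refine Primrec.ite (Primrec.nat_le.comp ?_ ?_) hE (Primrec.const [])
  · exact Primrec.nat_mul.comp (Primrec.const 2) (Primrec.list_length.comp hE)
  · exact primrec_nat_pow.comp (Primrec.const 2) (Primrec.fst.comp Primrec.unpair)

lemma primrecPred_avoidanceSet : PrimrecPred (· ∈ avoidanceSet) := by
  have hblock : Primrec fun x : List Bool => x.length.sqrt :=
    Primrec.nat_sqrt.comp Primrec.list_length
  have hprefix : Primrec fun x : List Bool => x.take x.length.sqrt.unpair.1 :=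
    Primrec.list_take.comp (Primrec.fst.comp (Primrec.unpair.comp hblock)) Primrec.id
  have hmem : PrimrecPred fun x : List Bool =>
      ∃ p ∈ forbiddenPrefixes x.length.sqrt, p = x.take x.length.sqrt.unpair.1 :=
    (PrimrecRel.exists_mem_list Primrec.eq).comp (primrec_forbiddenPrefixes.comp hblock) hprefix
  exact hmem.not.of_eq fun x => by simp [avoidanceSet]

lemma two_mul_length_forbiddenPrefixes_le (n : ℕ) :
    2 * (forbiddenPrefixes n).length ≤ 2 ^ n.unpair.1 := by
  simp only [forbiddenPrefixes]
  split_ifs with h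
  · exact h
  · simp

lemma two_pow_le_two_mul_card_avoidanceSet (n : ℕ) :
    2 ^ n ≤ 2 * {x ∈ cube n | x ∈ avoidanceSet}.card := by
  set k := n.sqrt.unpair.1 with hk
  set E := (forbiddenPrefixes n.sqrt).toFinset with hE
  have hkn : k ≤ n := unpair_fst_sqrt_le n
  have hcompl : {x ∈ cube n | x ∉ avoidanceSet} = cylinder E k n := by
    ext x
    simp only [Finset.mem_filter, mem_cube, mem_cylinder, and_congr_right_iff]
    rintro rfl
    simp [avoidanceSet, hE, hk]
  have hEcard : (E ∩ cube k).card ≤ (forbiddenPrefixes n.sqrt).length :=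
    (Finset.card_le_card Finset.inter_subset_left).trans (List.toFinset_card_le _)
  have hbad : 2 * {x ∈ cube n | x ∉ avoidanceSet}.card ≤ 2 ^ n := by
    calc 2 * {x ∈ cube n | x ∉ avoidanceSet}.card
        = 2 * (E ∩ cube k).card * 2 ^ (n - k) := by rw [hcompl, card_cylinder E hkn, mul_assoc]
      _ ≤ 2 ^ k * 2 ^ (n - k) := by
        gcongr
        exact (Nat.mul_le_mul_left 2 hEcard).trans (two_mul_length_forbiddenPrefixes_le _)
      _ = 2 ^ n := pow_mul_pow_sub 2 hkn
  have hsplit := Finset.card_filter_add_card_filter_not (s := cube n) (· ∈ avoidanceSet)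
  rw [card_cube] at hsplit
  omega

lemma append_mem_avoidanceSet {x w : List Bool} (hx : x ∈ avoidanceSet)
    (hblock : (x ++ w).length.sqrt = x.length.sqrt) : x ++ w ∈ avoidanceSet := by
  rw [avoidanceSet, Set.mem_ofPred_eq] at hx ⊢
  rwa [hblock, List.take_append_of_le_length (unpair_fst_sqrt_le _)]

lemma exists_block_forbidding {m : ℕ} {E : Finset (List Bool)} (hE : 2 * E.card ≤ 2 ^ m) :
    ∃ n ≥ m, ∀ x : List Bool, x.length.sqrt = n → (x ∈ avoidanceSet ↔ x.take m ∉ E) := by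
  refine ⟨Nat.pair m (encode E.toList), Nat.left_le_pair _ _, fun x hx => ?_⟩
  simp [avoidanceSet, forbiddenPrefixes, hx, hE]

lemma PrefixFreeSet.card_lt_card_unextended_add {S : Set (List Bool)} (hS : PrefixFreeSet S)
    (hsub : S ⊆ avoidanceSet) {P : Finset (List Bool)} (hPS : ↑P ⊆ S) {n : ℕ}
    (hlen : ∀ p ∈ P, p.length ≤ n ^ 2 + 2 * n) :
    P.card < {u ∈ unextended S (n ^ 2 + 2 * n) | u ∈ avoidanceSet}.card + 2 ^ n ^ 2 := by
  have hshort : {p ∈ P | p.length < n ^ 2}.card < 2 ^ n ^ 2 :=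
    card_lt_two_pow_of_forall_length_lt fun p hp => (Finset.mem_filter.1 hp).2
  have hlong : {p ∈ P | ¬ p.length < n ^ 2}.card ≤
      {u ∈ unextended S (n ^ 2 + 2 * n) | u ∈ avoidanceSet}.card := by
    refine hS.card_le_card_unextended (fun p hp => hPS (Finset.mem_filter.1 hp).1)
      (fun p hp => hlen p (Finset.mem_filter.1 hp).1) fun p hp => ?_
    obtain ⟨hp, hnp⟩ := Finset.mem_filter.1 hp
    have hpn := hlen p hp
    refine append_mem_avoidanceSet (hsub (hPS hp)) ?_
    rw [sqrt_eq_iff_mem_Icc.2 ⟨not_lt.1 hnp, hpn⟩, sqrt_eq_iff_mem_Icc, List.length_append,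
      List.length_replicate, Nat.add_sub_cancel' hpn]
    exact ⟨Nat.le_add_right _ _, le_rfl⟩
  have hsplit := Finset.card_filter_add_card_filter_not (s := P) (·.length < n ^ 2)
  omega

end AvoidanceSet

lemma not_bddAbove_of_eventually_exists_add_le {f : ℕ → ℚ} {ε : ℚ} (hε : 0 < ε)
    (h : ∀ᶠ m in atTop, ∃ n ≥ m, f m + ε ≤ f n) : ¬ BddAbove (Set.range f) := by
  obtain ⟨m₀, hm₀⟩ := eventually_atTop.1 h
  have hiter (j : ℕ) : ∃ m ≥ m₀, f m₀ + j * ε ≤ f m := by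
    induction j with
    | zero => exact ⟨m₀, le_rfl, by simp⟩
    | succ j ih =>
      obtain ⟨m, hm, hj⟩ := ih
      obtain ⟨n, hn, hstep⟩ := hm₀ m hm
      exact ⟨n, hm.trans hn, by push_cast; linarith⟩
  rintro ⟨B, hB⟩
  obtain ⟨j, hj⟩ := exists_nat_gt ((B - f m₀) / ε)
  rw [div_lt_iff₀ hε] at hj
  obtain ⟨m, -, hm⟩ := hiter j
  linarith [hB (Set.mem_range_self m)]

/-- The fraction of the strings of length `n` that are not proper prefixes of elements of `S`. -/
noncomputable def unextendedDensity (S : Set (List Bool)) (n : ℕ) : ℚ :=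
  (unextended S n).card / 2 ^ n

lemma unextendedDensity_le_one (S : Set (List Bool)) (n : ℕ) : unextendedDensity S n ≤ 1 := by
  have h := Finset.card_le_card (unextended_subset_cube S n)
  rw [card_cube] at h
  exact div_le_one_of_le₀ (by exact_mod_cast h) (by positivity)

namespace OptimalPrefix

variable {V : List Bool →. List Bool}

lemma eventually_exists_mem_dom_sqrt_length (hV : OptimalPrefix V) :
    ∀ᶠ n in atTop, ∃ p ∈ V.Dom, p.length.sqrt = n := by
  have hsq : Computable fun n : ℕ => n ^ 2 :=
    (primrec_nat_pow.comp Primrec.id (Primrec.const 2)).to_comp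
  obtain ⟨c, hc⟩ := hV.exists_finset_card_eq_two_pow hsq
  filter_upwards [eventually_gt_atTop c] with n hn
  obtain ⟨P, hP, hcard, hlen⟩ := hc n _ (Part.mem_some _)
  obtain ⟨p, hp, hnp⟩ : ∃ p ∈ P, n ^ 2 ≤ p.length := by
    by_contra! h
    exact (card_lt_two_pow_of_forall_length_lt h).ne hcard
  have hpn : p.length ≤ n ^ 2 + n + 1 + c := hlen p hp
  exact ⟨p, hP hp, sqrt_eq_iff_mem_Icc.2 ⟨hnp, by omega⟩⟩

lemma exists_two_pow_sub_le_card_unextended (hV : OptimalPrefix V)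
    (hsub : V.Dom ⊆ avoidanceSet) :
    ∃ c, ∀ n, 2 ^ (n ^ 2 + 2 * n - 2 * c - 1) - 2 ^ n ^ 2 ≤
      {u ∈ unextended V.Dom (n ^ 2 + 2 * n) | u ∈ avoidanceSet}.card := by
  have hsq : Primrec fun n : ℕ => n ^ 2 := primrec_nat_pow.comp Primrec.id (Primrec.const 2)
  have hend : Primrec fun n : ℕ => n ^ 2 + 2 * n :=
    Primrec.nat_add.comp hsq (Primrec.nat_mul.comp (Primrec.const 2) Primrec.id)
  have hl : Primrec₂ fun c n : ℕ => n ^ 2 + 2 * n - 2 * c - 1 :=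
    (Primrec.nat_sub.comp (Primrec.nat_sub.comp (hend.comp Primrec.snd)
      (Primrec.nat_mul.comp (Primrec.const 2) Primrec.fst)) (Primrec.const 1)).to₂
  have ht : Primrec₂ fun c n : ℕ => 2 ^ (n ^ 2 + 2 * n - 2 * c - 1) - 2 ^ n ^ 2 :=
    (Primrec.nat_sub.comp (primrec_nat_pow.comp (Primrec.const 2) hl)
      (primrec_nat_pow.comp (Primrec.const 2) (hsq.comp Primrec.snd))).to₂
  obtain ⟨g, hg, hsound, hcomplete⟩ := exists_partrec_card_unextended_lt hV.1
    primrecPred_avoidanceSet (hend.comp Primrec.snd).to₂ ht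
  obtain ⟨c, hc⟩ := hV.exists_finset_card_eq_two_pow (hg.map hl.to_comp)
  refine ⟨c, fun n => ?_⟩
  by_contra! hn
  obtain ⟨k, hk⟩ := Part.dom_iff_mem.1 (hcomplete c n hn)
  obtain ⟨P, hP, hcard, hlen⟩ := hc c _ (Part.mem_map _ hk)
  have hsparse := hsound c k hk
  dsimp only at hcard hlen hsparse
  -- The truncated difference of the powers is positive, so `k` is large compared with `c`.
  have hexp : k ^ 2 < k ^ 2 + 2 * k - 2 * c - 1 :=
    (Nat.pow_lt_pow_iff_right one_lt_two).1 (by omega)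
  have hmany := hV.2.1.card_lt_card_unextended_add hsub hP (n := k)
    fun p hp => (hlen p hp).trans (by omega)
  omega

lemma exists_pos_mul_le_card_unextended (hV : OptimalPrefix V) (hsub : V.Dom ⊆ avoidanceSet) :
    ∃ ε : ℚ, 0 < ε ∧ ∀ᶠ n in atTop, ε * 2 ^ (n ^ 2 + 2 * n) ≤
      {u ∈ unextended V.Dom (n ^ 2 + 2 * n) | u ∈ avoidanceSet}.card := by
  obtain ⟨c, hc⟩ := hV.exists_two_pow_sub_le_card_unextended hsub
  refine ⟨(2 ^ (2 * c + 2))⁻¹, by positivity, ?_⟩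
  filter_upwards [eventually_gt_atTop c] with n hn
  obtain ⟨d, hd⟩ : ∃ d, n ^ 2 + 2 * n = n ^ 2 + d + (2 * c + 2) :=
    ⟨2 * n - (2 * c + 2), by omega⟩
  have hcn := hc n
  have hexp : n ^ 2 + 2 * n - 2 * c - 1 = n ^ 2 + d + 1 := by omega
  have hmono : 2 ^ n ^ 2 ≤ 2 ^ (n ^ 2 + d) := Nat.pow_le_pow_right two_pos (Nat.le_add_right _ _)
  rw [hexp, pow_succ] at hcn
  have hle : 2 ^ (n ^ 2 + d) ≤
      {u ∈ unextended V.Dom (n ^ 2 + 2 * n) | u ∈ avoidanceSet}.card := by omega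
  calc ((2 ^ (2 * c + 2))⁻¹ * 2 ^ (n ^ 2 + 2 * n) : ℚ) = 2 ^ (n ^ 2 + d) := by
        rw [hd, pow_add _ _ (2 * c + 2)]
        field_simp
    _ ≤ _ := by exact_mod_cast hle

lemma eventually_two_mul_card_unextended_lt (hV : OptimalPrefix V)
    (hsub : V.Dom ⊆ avoidanceSet) :
    ∀ᶠ m in atTop, 2 * (unextended V.Dom m).card < 2 ^ m := by
  obtain ⟨n₀, hn₀⟩ := eventually_atTop.1 hV.eventually_exists_mem_dom_sqrt_length
  filter_upwards [eventually_ge_atTop n₀, eventually_ge_atTop 2] with m hm hm2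
  by_contra! hcon
  have hcompl := Finset.card_sdiff_add_card_eq_card (unextended_subset_cube V.Dom m)
  rw [card_cube] at hcompl
  obtain ⟨n, hmn, hn⟩ := exists_block_forbidding (m := m) (E := cube m \ unextended V.Dom m)
    (by omega)
  obtain ⟨p, hp, hpn⟩ := hn₀ n (hm.trans hmn)
  have hmp : m < p.length := by
    have := (sqrt_eq_iff_mem_Icc.1 hpn).1
    nlinarith
  refine (hn p hpn).1 (hsub hp) (Finset.mem_sdiff.2 ⟨?_, take_notMem_unextended hp hmp⟩)
  rw [mem_cube, List.length_take, min_eq_left hmp.le]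

lemma exists_unextendedDensity_add_le (hV : OptimalPrefix V) (hsub : V.Dom ⊆ avoidanceSet) :
    ∃ ε : ℚ, 0 < ε ∧ ∀ᶠ m in atTop, ∃ N ≥ m,
      unextendedDensity V.Dom m + ε ≤ unextendedDensity V.Dom N := by
  obtain ⟨ε, hε, hgain⟩ := hV.exists_pos_mul_le_card_unextended hsub
  obtain ⟨n₀, hn₀⟩ := eventually_atTop.1 hgain
  refine ⟨ε, hε, ?_⟩
  filter_upwards [eventually_ge_atTop n₀, hV.eventually_two_mul_card_unextended_lt hsub]
    with m hm hhalf
  obtain ⟨n, hmn, hn⟩ := exists_block_forbidding hhalf.le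
  have hgain := hn₀ n (hm.trans hmn)
  have hend : (n ^ 2 + 2 * n).sqrt = n := sqrt_eq_iff_mem_Icc.2 ⟨Nat.le_add_right _ _, le_rfl⟩
  have hmN : m ≤ n ^ 2 + 2 * n := by omega
  set N := n ^ 2 + 2 * n
  refine ⟨N, hmN, ?_⟩
  have hcard : (unextended V.Dom m).card * 2 ^ (N - m) +
      {u ∈ unextended V.Dom N | u ∈ avoidanceSet}.card ≤ (unextended V.Dom N).card := by
    refine card_unextended_mul_add_le hmN fun x hx hxA => ?_
    obtain ⟨hlen, hprefix⟩ := mem_cylinder.1 hx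
    exact (hn x (by rw [hlen, hend])).1 hxA hprefix
  have hcard' : ((unextended V.Dom m).card : ℚ) * 2 ^ (N - m) +
      {u ∈ unextended V.Dom N | u ∈ avoidanceSet}.card ≤ (unextended V.Dom N).card := by
    exact_mod_cast hcard
  rw [unextendedDensity, unextendedDensity, le_div_iff₀ (by positivity)]
  calc ((unextended V.Dom m).card / 2 ^ m + ε) * 2 ^ N
      = (unextended V.Dom m).card * 2 ^ (N - m) + ε * 2 ^ N := by
        rw [← pow_mul_pow_sub (2 : ℚ) hmN]
        field_simp
    _ ≤ (unextended V.Dom N).card := by linarith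

lemma not_dom_subset_avoidanceSet (hV : OptimalPrefix V) : ¬ V.Dom ⊆ avoidanceSet := by
  intro hsub
  obtain ⟨ε, hε, hgrow⟩ := hV.exists_unextendedDensity_add_le hsub
  exact not_bddAbove_of_eventually_exists_add_le hε hgrow
    ⟨1, Set.forall_mem_range.2 (unextendedDensity_le_one V.Dom)⟩

end OptimalPrefix

theorem stmt1_general :
    ∃ A : Set (List Bool), PrimrecPred (· ∈ A) ∧
      (∀ n : ℕ, 2 ^ n ≤ 2 * ({x | x ∈ A ∧ x.length = n} : Set (List Bool)).ncard) ∧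
      ∀ V : List Bool →. List Bool, OptimalPrefix V → ¬ V.Dom ⊆ A := by
  refine ⟨avoidanceSet, primrecPred_avoidanceSet, fun n => ?_,
    fun V hV => hV.not_dom_subset_avoidanceSet⟩
  have hlevel : {x | x ∈ avoidanceSet ∧ x.length = n} = ({x ∈ cube n | x ∈ avoidanceSet} :
      Finset (List Bool)) := by
    ext x
    simp [mem_cube, and_comm]
  rw [hlevel, Set.ncard_coe_finset]
  exact two_pow_le_two_mul_card_avoidanceSet n

theorem stmt1 :
    ∃ A : Set (List Bool), ComputablePred (· ∈ A) ∧
      (∀ n : ℕ, 2 ^ n ≤ 3 * ({x | x ∈ A ∧ x.length = n} : Set (List Bool)).ncard) ∧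
      ∀ V : List Bool →. List Bool, OptimalPrefix V → ¬ V.Dom ⊆ A := by
  obtain ⟨A, ⟨_, hA⟩, hcard, hV⟩ := stmt1_general
  exact ⟨A, ⟨_, hA.to_comp⟩, fun n => (hcard n).trans (by gcongr; norm_num), hV⟩
end
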